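/- For all integers k ≥ 2 and n ≥ 3, the diameter of the Cayley graph of SL_n(ℤ/kℤ) with respect to the generating set {Ā_n, B̄_n} is at most 3600·n²·ln k; that is, every element of SL_n(ℤ/kℤ) can be written as a product of at most 3600·n²·ln k elements of {Ā_n, Ā_n⁻¹, B̄_n, B̄_n⁻¹}. -/

import Mathlib

/-- The matrix `A_n`: 1's on the diagonal, an additional 1 in the (1,2) entry
(zero-indexed: (0,1)), and 0's elsewhere. -/
def Amat (n : ℕ) (R : Type) [CommRing R] : Matrix (Fin n) (Fin n) R :=
  Matrix.of fun i j => if i = j then 1 else if (i : ℕ) = 0 ∧ (j : ℕ) = 1 then 1 else 0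

/-- The matrix `B_n`: 1 in each entry (i, i+1), (−1)^(n−1) in the (n,1) entry
(zero-indexed: (n-1,0)), and 0's elsewhere. -/
def Bmat (n : ℕ) (R : Type) [CommRing R] : Matrix (Fin n) (Fin n) R :=
  Matrix.of fun i j => if (j : ℕ) = (i : ℕ) + 1 then 1
    else if (i : ℕ) = n - 1 ∧ (j : ℕ) = 0 then (-1 : R) ^ (n - 1) else 0

section DiameterBound

open Matrix

section Words

variable {n : ℕ} {R : Type} [CommRing R]

/-- `M` is the matrix of a product of at most `m` elements of `{A, A⁻¹, B, B⁻¹}`. -/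
def IsWordMatrix (A B : SpecialLinearGroup (Fin n) R) (m : ℕ) (M : Matrix (Fin n) (Fin n) R) :
    Prop :=
  ∃ l : List (SpecialLinearGroup (Fin n) R), l.length ≤ m ∧
    (∀ x ∈ l, x = A ∨ x = A⁻¹ ∨ x = B ∨ x = B⁻¹) ∧ (l.prod : Matrix (Fin n) (Fin n) R) = M

namespace IsWordMatrix

variable {A B : SpecialLinearGroup (Fin n) R} {a b m : ℕ} {M N : Matrix (Fin n) (Fin n) R}

theorem mono (h : IsWordMatrix A B a M) (hab : a ≤ b) : IsWordMatrix A B b M := by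
  obtain ⟨l, hl, hx, hp⟩ := h
  exact ⟨l, hl.trans hab, hx, hp⟩

theorem one : IsWordMatrix A B m 1 := ⟨[], by simp, by simp, by simp⟩

theorem mul (hM : IsWordMatrix A B a M) (hN : IsWordMatrix A B b N) :
    IsWordMatrix A B (a + b) (M * N) := by
  obtain ⟨l, hl, hx, hp⟩ := hM
  obtain ⟨l', hl', hx', hp'⟩ := hN
  refine ⟨l ++ l', by simp; omega, ?_, by simp [hp, hp']⟩
  intro x h
  rcases List.mem_append.1 h with h | h
  exacts [hx x h, hx' x h]

theorem pow (hM : IsWordMatrix A B a M) (m : ℕ) : IsWordMatrix A B (m * a) (M ^ m) := by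
  induction m with
  | zero => simpa using one
  | succ m ih => rw [pow_succ, add_mul, one_mul]; exact ih.mul hM

theorem of_mul_eq_one (hM : IsWordMatrix A B a M) (h : M * N = 1) : IsWordMatrix A B a N := by
  obtain ⟨l, hl, hx, hp⟩ := hM
  refine ⟨(l.map (·⁻¹)).reverse, by simpa using hl, ?_, ?_⟩
  · intro x h
    simp only [List.mem_reverse, List.mem_map] at h
    obtain ⟨y, hy, rfl⟩ := h
    rcases hx y hy with h | h | h | h <;> simp [h]
  · rw [← List.prod_inv_reverse]
    generalize l.prod = g at hp ⊢
    have hinv : (g⁻¹ : SpecialLinearGroup (Fin n) R).1 * g.1 = 1 :=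
      congrArg Subtype.val (inv_mul_cancel g)
    exact left_inv_eq_right_inv hinv (by rw [hp, h])

theorem conj (hM : IsWordMatrix A B a M) {P Q : Matrix (Fin n) (Fin n) R}
    (hP : IsWordMatrix A B b P) (hPQ : P * Q = 1) :
    IsWordMatrix A B (2 * b + a) (P * M * Q) :=
  ((hP.mul hM).mul (hP.of_mul_eq_one hPQ)).mono (by omega)

theorem left : IsWordMatrix A B 1 (A : Matrix (Fin n) (Fin n) R) :=
  ⟨[A], by simp, by simp, by simp⟩

theorem right : IsWordMatrix A B 1 (B : Matrix (Fin n) (Fin n) R) :=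
  ⟨[B], by simp, by simp, by simp⟩

end IsWordMatrix

/-- The transvection `1 + u wᵀ`. -/
def rankOneTransvection (u w : Fin n → R) : Matrix (Fin n) (Fin n) R := 1 + vecMulVec u w

local notation "𝕋" => rankOneTransvection

theorem rankOneTransvection_mulVec (u w v : Fin n → R) : 𝕋 u w *ᵥ v = v + (w ⬝ᵥ v) • u := by
  ext i
  simp [rankOneTransvection, add_mulVec, vecMulVec_mulVec]

theorem vecMul_rankOneTransvection (u w v : Fin n → R) : v ᵥ* 𝕋 u w = v + (v ⬝ᵥ u) • w := by
  ext i
  simp [rankOneTransvection, vecMul_add, vecMul_vecMulVec]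

theorem rankOneTransvection_zero (u : Fin n → R) : 𝕋 u 0 = 1 := by
  simp [rankOneTransvection]

theorem rankOneTransvection_mul {u w u' w' : Fin n → R} (h : w ⬝ᵥ u' = 0) :
    𝕋 u w * 𝕋 u' w' = 1 + vecMulVec u w + vecMulVec u' w' := by
  simp [rankOneTransvection, mul_add, add_mul, vecMulVec_mul_vecMulVec, h]

theorem rankOneTransvection_mul_same {u w w' : Fin n → R} (h : w ⬝ᵥ u = 0) :
    𝕋 u w * 𝕋 u w' = 𝕋 u (w + w') := by
  rw [rankOneTransvection_mul h, rankOneTransvection, vecMulVec_add, add_assoc]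

theorem rankOneTransvection_mul_neg {u w : Fin n → R} (h : w ⬝ᵥ u = 0) :
    𝕋 u w * 𝕋 u (-w) = 1 := by
  rw [rankOneTransvection_mul_same h, add_neg_cancel, rankOneTransvection_zero]

theorem mul_rankOneTransvection_mul {P Q : Matrix (Fin n) (Fin n) R} (h : P * Q = 1)
    (u w : Fin n → R) : P * 𝕋 u w * Q = 𝕋 (P *ᵥ u) (w ᵥ* Q) := by
  simp [rankOneTransvection, mul_add, add_mul, mul_vecMulVec, vecMulVec_mul, h]

theorem IsWordMatrix.rankOneTransvection_neg {A B : SpecialLinearGroup (Fin n) R} {m : ℕ}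
    {u w : Fin n → R} (hw : IsWordMatrix A B m (𝕋 u w)) (h : w ⬝ᵥ u = 0) :
    IsWordMatrix A B m (𝕋 u (-w)) :=
  hw.of_mul_eq_one (rankOneTransvection_mul_neg h)

end Words

theorem ZMod.exists_isUnit_add_mul {k : ℕ} (hk : k ≠ 0) (a y : ZMod k) :
    ∃ x, IsUnit (a + x * (1 - y * a)) := by
  have : NeZero k := ⟨hk⟩
  set b := 1 - y * a with hb
  let x : ℕ := ∏ p ∈ k.primeFactors.filter (fun p => ¬ p ∣ a.val), p
  refine ⟨x, ?_⟩
  have : a + x * b = ((a.val + x * b.val : ℕ) : ZMod k) := by simp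
  rw [this, ZMod.isUnit_iff_coprime]
  refine Nat.Coprime.symm (Nat.coprime_of_dvd fun p hp hpk hdvd => ?_)
  have hp' := hp.prime
  by_cases hpa : p ∣ a.val
  · rcases hp'.dvd_or_dvd ((Nat.dvd_add_right hpa).1 hdvd) with h | h
    · obtain ⟨q, hq, hpq⟩ := (hp'.dvd_finsetProd_iff _).1 h
      simp only [Finset.mem_filter, Nat.mem_primeFactors] at hq
      rw [Nat.prime_dvd_prime_iff_eq hp hq.1.1] at hpq
      exact hq.2 (hpq ▸ hpa)
    · have h1 : ((b.val + y.val * a.val : ℕ) : ZMod k) = ((1 : ℕ) : ZMod k) := by simp [hb]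
      have h2 := ((ZMod.natCast_eq_natCast_iff _ _ _).1 h1).of_dvd hpk
      have h3 : p ∣ 1 := (h2.dvd_iff (dvd_refl p)).1 (dvd_add h (hpa.mul_left _))
      exact hp.one_lt.ne' (Nat.dvd_one.1 h3)
  · refine hpa ((Nat.dvd_add_left (Dvd.dvd.mul_right ?_ _)).1 hdvd)
    exact Finset.dvd_prod_of_mem (fun p => p) (by simp [hp, hpk, hk, hpa])

section Elimination

variable {n : ℕ} {R : Type} [CommRing R]

local notation "𝕋" => rankOneTransvection

theorem IsWordMatrix.det_eq_one {A B : SpecialLinearGroup (Fin n) R} {m : ℕ}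
    {M : Matrix (Fin n) (Fin n) R} (h : IsWordMatrix A B m M) : M.det = 1 := by
  obtain ⟨l, -, -, rfl⟩ := h
  exact l.prod.det_coe

theorem rankOneTransvection_single_mul (p : Fin n) (x : Fin n → R)
    (M : Matrix (Fin n) (Fin n) R) :
    𝕋 (Pi.single p 1) x * M = M.updateRow p (M p + x ᵥ* M) := by
  ext i j
  rw [rankOneTransvection, add_mul, one_mul, vecMulVec_mul, Matrix.add_apply, vecMulVec_apply,
    updateRow_apply]
  by_cases h : i = p
  · subst h; simp
  · simp [h]

theorem rankOneTransvection_single_sub_mul (p : Fin n) (w : Fin n → R)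
    (M : Matrix (Fin n) (Fin n) R) :
    𝕋 (Pi.single p 1) (w - Pi.single p 1) * M = M.updateRow p (w ᵥ* M) := by
  rw [rankOneTransvection_single_mul]
  congr 1
  ext j
  simp [sub_vecMul, row]

/-- The first `i` rows of `M` are those of an upper unitriangular matrix. -/
def UpperUnitriangularRows (M : Matrix (Fin n) (Fin n) R) (i : ℕ) : Prop :=
  ∀ j : Fin n, (j : ℕ) < i → M j j = 1 ∧ ∀ l < j, M j l = 0

theorem UpperUnitriangularRows.exists_vecMul_eq_zero {M : Matrix (Fin n) (Fin n) R} {i : ℕ}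
    (hM : UpperUnitriangularRows M i) {p : Fin n} (hp : i ≤ p) :
    ∃ v : Fin n → R, v p = 1 ∧ (∀ j : Fin n, i ≤ j → j ≠ p → v j = 0) ∧
      ∀ l : Fin n, (l : ℕ) < i → (v ᵥ* M) l = 0 := by
  induction i with
  | zero => exact ⟨Pi.single p 1, by simp, fun j _ hj => by simp [hj], by simp⟩
  | succ i ih =>
    obtain ⟨v, hv1, hv0, hv⟩ := ih (fun j hj => hM j (by omega)) (by omega)
    let q : Fin n := ⟨i, by omega⟩
    obtain ⟨hq1, hq0⟩ := hM q (by simp [q])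
    refine ⟨v - Pi.single q ((v ᵥ* M) q), ?_, fun j hj hjp => ?_, fun l hl => ?_⟩
    · have : p ≠ q := fun h => by simp [h, q] at hp
      simp [hv1, this]
    · have : j ≠ q := fun h => by simp [h, q] at hj
      simp [this, hv0 j (by omega) hjp]
    · rw [sub_vecMul, single_vecMul, Pi.sub_apply]
      simp only [Pi.smul_apply, row, smul_eq_mul]
      rcases Nat.lt_succ_iff_lt_or_eq.1 hl with hl | hl
      · rw [hq0 l (by simpa [Fin.lt_def, q] using hl), hv l hl]; simp
      · obtain rfl : l = q := Fin.ext hl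
        rw [hq1]; simp

variable {A B : SpecialLinearGroup (Fin n) R} {c : ℕ}

theorem IsWordMatrix.of_updateRow
    (hT : ∀ (p : Fin n) (x : Fin n → R), x p = 0 → IsWordMatrix A B c (𝕋 (Pi.single p 1) x))
    {p : Fin n} {w : Fin n → R} (hw : w p = 1) {M : Matrix (Fin n) (Fin n) R} :
    (M.updateRow p (w ᵥ* M)).det = M.det ∧
      ∀ a, IsWordMatrix A B a (M.updateRow p (w ᵥ* M)) → IsWordMatrix A B (c + a) M := by
  have h0 : (w - Pi.single p 1 : Fin n → R) p = 0 := by simp [hw]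
  have h1 := hT p _ h0
  rw [← rankOneTransvection_single_sub_mul]
  refine ⟨by rw [det_mul, h1.det_eq_one, one_mul], fun a ha => ?_⟩
  have h2 : 𝕋 (Pi.single p 1) (-(w - Pi.single p 1)) * 𝕋 (Pi.single p 1) (w - Pi.single p 1)
      = 1 := mul_eq_one_comm.1 (rankOneTransvection_mul_neg (by simpa using h0))
  have h3 := (h1.rankOneTransvection_neg (by simpa using h0)).mul ha
  rwa [← mul_assoc, h2, one_mul] at h3

theorem UpperUnitriangularRows.updateRow {M : Matrix (Fin n) (Fin n) R} {i : ℕ}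
    (hM : UpperUnitriangularRows M i) {p : Fin n} (hp : i ≤ p) (r : Fin n → R) :
    UpperUnitriangularRows (M.updateRow p r) i := by
  intro j hj
  have : j ≠ p := by rintro rfl; omega
  simpa [updateRow_ne this] using hM j hj

theorem UpperUnitriangularRows.updateRow_succ {M : Matrix (Fin n) (Fin n) R} {p : Fin n}
    (hM : UpperUnitriangularRows M p) {r : Fin n → R} (hr1 : r p = 1) (hr0 : ∀ l < p, r l = 0) :
    UpperUnitriangularRows (M.updateRow p r) (p + 1) := by
  intro j hj
  by_cases h : j = p
  · subst h; simpa [updateRow_self] using ⟨hr1, hr0⟩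
  · exact hM.updateRow le_rfl r j (by have := Fin.val_ne_of_ne h; omega)

theorem UpperUnitriangularRows.exists_succ
    (hR : ∀ a y : R, ∃ x, IsUnit (a + x * (1 - y * a)))
    (hT : ∀ (p : Fin n) (x : Fin n → R), x p = 0 → IsWordMatrix A B c (𝕋 (Pi.single p 1) x))
    {M : Matrix (Fin n) (Fin n) R} {i z : Fin n} (hiz : i < z) (hdet : M.det = 1)
    (hM : UpperUnitriangularRows M i) :
    ∃ M' : Matrix (Fin n) (Fin n) R, M'.det = 1 ∧ UpperUnitriangularRows M' (i + 1) ∧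
      ∀ a, IsWordMatrix A B a M' → IsWordMatrix A B (2 * c + a) M := by
  obtain ⟨v, hv1, -, hv⟩ := hM.exists_vecMul_eq_zero (p := z) hiz.le
  set w := M⁻¹ i with hw
  have hwM : w ᵥ* M = Pi.single i 1 := by
    have : M⁻¹ * M = 1 := nonsing_inv_mul _ (by simp [hdet])
    ext j
    have h := congrFun (congrFun this i) j
    rw [mul_apply_eq_vecMul] at h
    rw [hw, h, one_apply, Pi.single_apply]
    simp [eq_comm]
  obtain ⟨x, hx⟩ := hR ((v ᵥ* M) i) (w z)
  set w' := v + x • (w - w z • v) with hw'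
  have hw'z : w' z = 1 := by simp [hw', hv1]
  have hw'M : w' ᵥ* M = v ᵥ* M + x • (Pi.single i 1 - w z • v ᵥ* M) := by
    rw [hw', add_vecMul, smul_vecMul, sub_vecMul, smul_vecMul, hwM]
  obtain ⟨hdet1, hword1⟩ := IsWordMatrix.of_updateRow hT hw'z (M := M)
  set M₁ := M.updateRow z (w' ᵥ* M) with hM₁
  have hup : UpperUnitriangularRows M₁ i := hM.updateRow hiz.le _
  obtain ⟨v₂, hv₂1, -, hv₂⟩ := hup.exists_vecMul_eq_zero (p := i) le_rfl
  obtain ⟨ε, hε⟩ := hx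
  set w₂ := v₂ + Pi.single z ((1 - (v₂ ᵥ* M₁) i) * ↑ε⁻¹) with hw₂
  have hw₂i : w₂ i = 1 := by simp [hw₂, hv₂1, hiz.ne]
  have hw₂M : w₂ ᵥ* M₁ = v₂ ᵥ* M₁ + ((1 - (v₂ ᵥ* M₁) i) * ↑ε⁻¹) • (w' ᵥ* M) := by
    rw [hw₂, add_vecMul, single_vecMul]
    congr 2
    simp [hM₁, row]
  obtain ⟨hdet2, hword2⟩ := IsWordMatrix.of_updateRow hT hw₂i (M := M₁)
  refine ⟨_, hdet2.trans (hdet1.trans hdet), hup.updateRow_succ ?_ ?_, fun a ha =>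
    (hword1 _ (hword2 a ha)).mono (by omega)⟩
  · have : (w' ᵥ* M) i = ε := by rw [hw'M, hε]; simp
    rw [hw₂M]; simp [this, mul_assoc]
  · intro l hl
    rw [hw₂M, hw'M]
    simp [hv l hl, hv₂ l hl, hl.ne]

theorem IsWordMatrix.of_upperUnitriangularRows
    (hT : ∀ (p : Fin n) (x : Fin n → R), x p = 0 → IsWordMatrix A B c (𝕋 (Pi.single p 1) x))
    {M : Matrix (Fin n) (Fin n) R} (hM : UpperUnitriangularRows M n) :
    IsWordMatrix A B (n * c) M := by
  have key : ∀ i ≤ n, IsWordMatrix A B (i * c)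
      (of fun j l : Fin n =>
        if (j : ℕ) < i then M j l else (1 : Matrix (Fin n) (Fin n) R) j l) := by
    intro i
    induction i with
    | zero => intro _; simpa using! IsWordMatrix.one
    | succ i ih =>
      intro hi
      let p : Fin n := ⟨i, hi⟩
      obtain ⟨h1, h0⟩ := hM p hi
      have := (hT p (M p - Pi.single p 1) (by simp [h1])).mul (ih (by omega))
      refine (this.mono (by rw [add_mul]; omega) : IsWordMatrix A B ((i + 1) * c) _) |> (cast ?_)
      congr 1
      rw [rankOneTransvection_single_mul]
      have hx : (M p - Pi.single p 1) ᵥ* (of fun j l : Fin n => if (j : ℕ) < i then M j l else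
          (1 : Matrix (Fin n) (Fin n) R) j l) = M p - Pi.single p 1 := by
        refine Eq.trans ?_ (vecMul_one _)
        funext l
        simp only [vecMul, dotProduct]
        refine Finset.sum_congr rfl fun j _ => ?_
        by_cases hj : (j : ℕ) < i
        · have : j ≠ p := fun h => by simp [h, p] at hj
          simp [this, h0 j hj]
        · simp [hj]
      rw [hx]
      ext j l
      by_cases hj : j = p
      · subst hj
        simp [p, one_apply, Pi.single_apply, eq_comm]
      · have : (j : ℕ) ≠ i := fun h => hj (Fin.ext h)
        simp [updateRow_ne hj, Order.lt_add_one_iff, le_iff_lt_or_eq, this]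
  simpa using! key n le_rfl

theorem IsWordMatrix.of_det_eq_one
    (hR : ∀ a y : R, ∃ x, IsUnit (a + x * (1 - y * a)))
    (hT : ∀ (p : Fin n) (x : Fin n → R), x p = 0 → IsWordMatrix A B c (𝕋 (Pi.single p 1) x))
    (hn : 0 < n) {M : Matrix (Fin n) (Fin n) R} (hdet : M.det = 1) :
    IsWordMatrix A B (3 * n * c) M := by
  let z : Fin n := ⟨n - 1, by omega⟩
  have key : ∀ i ≤ n - 1, ∃ M' : Matrix (Fin n) (Fin n) R, M'.det = 1 ∧
      UpperUnitriangularRows M' i ∧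
      ∀ a, IsWordMatrix A B a M' → IsWordMatrix A B (i * (2 * c) + a) M := by
    intro i
    induction i with
    | zero => exact fun _ => ⟨M, hdet, fun j hj => by omega, by simp⟩
    | succ i ih =>
      intro hi
      obtain ⟨M', hdet', hM', hword⟩ := ih (by omega)
      obtain ⟨M'', hdet'', hM'', hword'⟩ := UpperUnitriangularRows.exists_succ hR hT
        (i := ⟨i, by omega⟩) (z := z) (by simp [z, Fin.lt_def]; omega) hdet' hM'
      exact ⟨M'', hdet'', hM'', fun a ha => (hword _ (hword' a ha)).mono (by rw [add_mul]; omega)⟩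
  obtain ⟨M₁, hdet₁, hM₁, hword₁⟩ := key (n - 1) le_rfl
  obtain ⟨v, hv1, -, hv⟩ := hM₁.exists_vecMul_eq_zero (p := z) le_rfl
  obtain ⟨hdet₂, hword₂⟩ := IsWordMatrix.of_updateRow hT hv1 (M := M₁)
  set M₂ := M₁.updateRow z (v ᵥ* M₁) with hM₂
  have hrows : UpperUnitriangularRows M₂ (n - 1) := hM₁.updateRow le_rfl _
  have hlast : ∀ l < z, M₂ z l = 0 := fun l hl => by simpa [hM₂] using hv l hl
  have hzz : M₂ z z = 1 := by
    have h := hdet₂.trans hdet₁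
    rw [det_of_isUpperTriangular, ← Finset.mul_prod_erase _ _ (Finset.mem_univ z),
      Finset.prod_eq_one, mul_one] at h
    · exact h
    · intro j hj
      exact (hrows j (by
        have := Fin.val_ne_of_ne (Finset.ne_of_mem_erase hj); simp [z] at this; omega)).1
    · intro j l hl
      by_cases hj : j = z
      · subst hj; exact hlast l hl
      · exact (hrows j (by
          have := Fin.val_ne_of_ne hj; simp [z] at this; omega)).2 l hl
  have hall : UpperUnitriangularRows M₂ n := by
    intro j _
    by_cases hj : j = z
    · subst hj; exact ⟨hzz, hlast⟩
    · exact hrows j (by have := Fin.val_ne_of_ne hj; simp [z] at this; omega)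
  refine (hword₁ _ (hword₂ _ (IsWordMatrix.of_upperUnitriangularRows hT hall))).mono ?_
  obtain ⟨m, rfl⟩ : ∃ m, n = m + 1 := ⟨n - 1, by omega⟩
  simp only [Nat.add_sub_cancel]
  nlinarith

end Elimination

section StandardPair

variable {n : ℕ} {R : Type} [CommRing R]

local notation "𝕋" => rankOneTransvection

/-- The standard basis vector of `Rⁿ` with a `1` in position `i`, for a natural number `i < n`. -/
def natSingle (i : ℕ) : Fin n → R := fun j => if (j : ℕ) = i then 1 else 0

local notation "𝕖" => natSingle

theorem natSingle_val (i : Fin n) : (𝕖 (i : ℕ) : Fin n → R) = Pi.single i 1 := by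
  ext j
  simp [natSingle, Pi.single_apply, Fin.ext_iff]

theorem dotProduct_natSingle {i : ℕ} (hi : i < n) (v : Fin n → R) : v ⬝ᵥ 𝕖 i = v ⟨i, hi⟩ := by
  have := natSingle_val (R := R) ⟨i, hi⟩
  simp only at this
  rw [this, dotProduct_single, mul_one]

theorem natSingle_dotProduct_natSingle {i j : ℕ} (hj : j < n) :
    (𝕖 i : Fin n → R) ⬝ᵥ 𝕖 j = if i = j then 1 else 0 := by
  rw [dotProduct_natSingle hj, natSingle]
  simp [eq_comm]

theorem ext_natSingle {v w : Fin n → R} (h : ∀ i < n, v ⬝ᵥ 𝕖 i = w ⬝ᵥ 𝕖 i) : v = w := by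
  ext i
  simpa [dotProduct_natSingle i.2] using h i i.2

/-- `A = 1 + e₀ e₁ᵀ` and `B` shifts the basis vectors cyclically up to the sign `s`. -/
structure IsStandardPair (A B : SpecialLinearGroup (Fin n) R) (s : R) : Prop where
  three_le : 3 ≤ n
  left_eq : A.1 = 𝕋 (𝕖 0) (𝕖 1)
  shift : ∀ i, i + 1 < n → B.1 *ᵥ 𝕖 (i + 1) = 𝕖 i
  wrap : B.1 *ᵥ 𝕖 0 = s • 𝕖 (n - 1)
  sign : s = 1 ∨ s = -1

/-- `r` is the image of one of the integers `-1, 0, 1, 2`. -/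
def IsSmall (r : R) : Prop := r = -1 ∨ r = 0 ∨ r = 1 ∨ r = 2

namespace IsStandardPair

variable {A B : SpecialLinearGroup (Fin n) R} {s : R}

theorem mul_inv_right (_ : IsStandardPair A B s) : B.1 * (B⁻¹).1 = 1 :=
  congrArg Subtype.val (mul_inv_cancel B)

theorem inv_mul_right (_ : IsStandardPair A B s) : (B⁻¹).1 * B.1 = 1 :=
  congrArg Subtype.val (inv_mul_cancel B)

theorem isWordMatrix_left (h : IsStandardPair A B s) : IsWordMatrix A B 1 (𝕋 (𝕖 0) (𝕖 1)) :=
  h.left_eq ▸ IsWordMatrix.left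

theorem isWordMatrix_right (_ : IsStandardPair A B s) : IsWordMatrix A B 1 B.1 :=
  IsWordMatrix.right

theorem isWordMatrix_inv (h : IsStandardPair A B s) : IsWordMatrix A B 1 (B⁻¹).1 :=
  h.isWordMatrix_right.of_mul_eq_one h.mul_inv_right

theorem inv_mulVec (h : IsStandardPair A B s) {i : ℕ} (hi : i + 1 < n) :
    (B⁻¹).1 *ᵥ 𝕖 i = 𝕖 (i + 1) := by
  rw [← h.shift i hi, mulVec_mulVec, h.inv_mul_right, one_mulVec]

theorem inv_mulVec_last (h : IsStandardPair A B s) : (B⁻¹).1 *ᵥ 𝕖 (n - 1) = s • 𝕖 0 := by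
  have hs : s * s = 1 := by rcases h.sign with rfl | rfl <;> simp
  have := congrArg (fun v => s • ((B⁻¹).1 *ᵥ v)) h.wrap
  simp only [mulVec_mulVec, h.inv_mul_right, one_mulVec, mulVec_smul, smul_smul, hs, one_smul]
    at this
  exact this.symm

theorem vecMul_right (h : IsStandardPair A B s) {i : ℕ} (hi : i + 1 < n) :
    (𝕖 i : Fin n → R) ᵥ* B.1 = 𝕖 (i + 1) := by
  refine ext_natSingle fun j hj => ?_
  rw [← dotProduct_mulVec, natSingle_dotProduct_natSingle hj]
  cases j with
  | zero =>
    rw [h.wrap, dotProduct_smul, natSingle_dotProduct_natSingle (by omega)]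
    simp [show i ≠ n - 1 by omega]
  | succ j => rw [h.shift j hj, natSingle_dotProduct_natSingle (by omega)]; simp

theorem vecMul_inv (h : IsStandardPair A B s) {i : ℕ} (hi : i + 1 < n) :
    (𝕖 (i + 1) : Fin n → R) ᵥ* (B⁻¹).1 = 𝕖 i := by
  rw [← h.vecMul_right hi, vecMul_vecMul, h.mul_inv_right, vecMul_one]

theorem vecMul_inv_zero (h : IsStandardPair A B s) :
    (𝕖 0 : Fin n → R) ᵥ* (B⁻¹).1 = s • 𝕖 (n - 1) := by
  have := h.three_le
  refine ext_natSingle fun j hj => ?_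
  rw [← dotProduct_mulVec, smul_dotProduct, natSingle_dotProduct_natSingle hj]
  by_cases hj' : j + 1 < n
  · rw [h.inv_mulVec hj', natSingle_dotProduct_natSingle hj']
    simp [show n - 1 ≠ j by omega]
  · obtain rfl : j = n - 1 := by omega
    rw [h.inv_mulVec_last, dotProduct_smul, natSingle_dotProduct_natSingle (by omega)]
    simp

theorem isWordMatrix_conj_right (h : IsStandardPair A B s) {m : ℕ} {M : Matrix (Fin n) (Fin n) R}
    (hM : IsWordMatrix A B m M) : IsWordMatrix A B (m + 2) ((B⁻¹).1 * M * B.1) :=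
  (hM.conj h.isWordMatrix_inv h.inv_mul_right).mono (by omega)

theorem isWordMatrix_left_smul (h : IsStandardPair A B s) {r : R} (hr : IsSmall r) :
    IsWordMatrix A B 2 (𝕋 (𝕖 0) ((r - 1) • 𝕖 1)) := by
  have := h.three_le
  have h01 : (𝕖 1 : Fin n → R) ⬝ᵥ 𝕖 0 = 0 := by
    rw [natSingle_dotProduct_natSingle (by omega)]; simp
  have h1 := h.isWordMatrix_left.rankOneTransvection_neg h01
  rcases hr with rfl | rfl | rfl | rfl
  · have h2 := h1.mul h1
    rw [rankOneTransvection_mul_same (by simp [h01])] at h2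
    convert h2 using 2
    rw [← two_smul R, smul_neg, ← neg_smul]
    congr 1; ring
  · simpa using h1.mono (by omega)
  · simpa [rankOneTransvection_zero] using IsWordMatrix.one
  · convert h.isWordMatrix_left.mono (b := 2) (by omega) using 2
    rw [show (2 - 1 : R) = 1 by ring, one_smul]

theorem exists_isWordMatrix_vecMul (h : IsStandardPair A B s) {m : ℕ} (hm : m + 2 ≤ n)
    {w : Fin n → R} (hw0 : w ⬝ᵥ 𝕖 0 = 0) (hw1 : w ⬝ᵥ 𝕖 1 = 1)
    (hws : ∀ i, 2 ≤ i → i < m + 2 → IsSmall (w ⬝ᵥ 𝕖 i))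
    (hwz : ∀ i, m + 2 ≤ i → i < n → w ⬝ᵥ 𝕖 i = 0) :
    ∃ H, IsWordMatrix A B (5 * m) H ∧ 𝕖 1 ᵥ* H = w ∧
      ∀ i, i < n → i = 0 ∨ m + 2 ≤ i → H *ᵥ 𝕖 i = 𝕖 i ∧ 𝕖 i ᵥ* H = 𝕖 i := by
  have hn := h.three_le
  induction m generalizing w with
  | zero =>
    refine ⟨1, IsWordMatrix.one, ?_, by simp⟩
    rw [vecMul_one]
    refine ext_natSingle fun i hi => ?_
    rw [natSingle_dotProduct_natSingle hi]
    rcases i with _ | _ | i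
    · simp [hw0]
    · simp [hw1]
    · rw [hwz (i + 2) (by omega) hi]; simp
  | succ m ih =>
    have hdot : ∀ i j, j < n → (𝕖 i : Fin n → R) ⬝ᵥ 𝕖 j = if i = j then 1 else 0 :=
      fun i j hj => natSingle_dotProduct_natSingle hj
    set v := w - 𝕖 1 - (w ⬝ᵥ 𝕖 2 - 1) • 𝕖 2 with hv
    have hvdot : ∀ i < n, v ⬝ᵥ 𝕖 i =
        w ⬝ᵥ 𝕖 i - (if 1 = i then 1 else 0) - (w ⬝ᵥ 𝕖 2 - 1) * (if 2 = i then 1 else 0) := by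
      intro i hi
      rw [hv, sub_dotProduct, sub_dotProduct, smul_dotProduct, hdot 1 i hi, hdot 2 i hi,
        smul_eq_mul]
    have hshift : ∀ i, i + 1 < n → (v ᵥ* (B⁻¹).1) ⬝ᵥ 𝕖 i = v ⬝ᵥ 𝕖 (i + 1) := by
      intro i hi
      rw [← dotProduct_mulVec, h.inv_mulVec hi]
    obtain ⟨H, hH, hHw, hfix⟩ := ih (w := v ᵥ* (B⁻¹).1) (by omega)
      (by rw [hshift 0 (by omega), hvdot _ (by omega)]; simp [hw1])
      (by rw [hshift 1 (by omega), hvdot _ (by omega)]; simp)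
      (fun i hi him => by
        rw [hshift i (by omega), hvdot _ (by omega)]
        simpa [show i ≠ 0 by omega, show 2 ≠ i + 1 by omega] using
          hws (i + 1) (by omega) (by omega))
      (fun i hi hin => by
        by_cases hi' : i + 1 < n
        · rw [hshift i (by omega), hvdot _ (by omega)]
          simpa [show i ≠ 0 by omega, show 2 ≠ i + 1 by omega] using
            hwz (i + 1) (by omega) (by omega)
        · obtain rfl : i = n - 1 := by omega
          rw [← dotProduct_mulVec, h.inv_mulVec_last, dotProduct_smul, hvdot _ (by omega)]
          simp [hw0])
    have hconj : ∀ x : Fin n → R, (B⁻¹).1 * 𝕋 (𝕖 0) x * B.1 = 𝕋 (𝕖 1) (x ᵥ* B.1) := fun x => by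
      rw [mul_rankOneTransvection_mul h.inv_mul_right, h.inv_mulVec (by omega)]
    have hE := h.isWordMatrix_left
    have hF := h.isWordMatrix_left_smul (hws 2 le_rfl (by omega))
    set c := w ⬝ᵥ 𝕖 2 - 1 with hc
    have hEB : 𝕋 (𝕖 1) (𝕖 2) = (B⁻¹).1 * 𝕋 (𝕖 0) (𝕖 1) * B.1 := by
      rw [hconj, h.vecMul_right (by omega)]
    have hFB : 𝕋 (𝕖 1) (c • 𝕖 2) = (B⁻¹).1 * 𝕋 (𝕖 0) (c • 𝕖 1) * B.1 := by
      rw [hconj, smul_vecMul, h.vecMul_right (by omega)]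
    have hfix' : ∀ i, i < n → i = 0 ∨ m + 1 + 2 ≤ i →
        ((B⁻¹).1 * H * B.1) *ᵥ 𝕖 i = 𝕖 i ∧ 𝕖 i ᵥ* ((B⁻¹).1 * H * B.1) = 𝕖 i := by
      intro i hi hi'
      simp only [← mulVec_mulVec, ← vecMul_vecMul]
      rcases i with _ | i
      · obtain ⟨h1, h2⟩ := hfix (n - 1) (by omega) (by omega)
        rw [h.wrap, mulVec_smul, h1, ← h.wrap, h.vecMul_inv_zero, smul_vecMul, h2,
          ← h.vecMul_inv_zero, mulVec_mulVec, vecMul_vecMul, h.inv_mul_right]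
        simp
      · obtain ⟨h1, h2⟩ := hfix i (by omega) (by omega)
        rw [h.shift i hi, h1, h.vecMul_inv hi, h2, h.inv_mulVec hi, h.vecMul_right hi]
        simp
    refine ⟨𝕋 (𝕖 1) (𝕖 2) * ((B⁻¹).1 * H * B.1) * 𝕋 (𝕖 1) (c • 𝕖 2), ?_, ?_, ?_⟩
    · have : 𝕋 (𝕖 1) (𝕖 2) * ((B⁻¹).1 * H * B.1) * 𝕋 (𝕖 1) (c • 𝕖 2) =
          (B⁻¹).1 * (𝕋 (𝕖 0) (𝕖 1) * H * 𝕋 (𝕖 0) (c • 𝕖 1)) * B.1 := by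
        have hB := h.mul_inv_right
        rw [hEB, hFB]
        simp only [mul_assoc]
        rw [← mul_assoc B.1 (B⁻¹).1, hB, one_mul, ← mul_assoc B.1 (B⁻¹).1, hB, one_mul]
      rw [this]
      exact (h.isWordMatrix_conj_right ((hE.mul hH).mul hF)).mono (by omega)
    · have h1 : (𝕖 1 : Fin n → R) ᵥ* ((B⁻¹).1 * H * B.1) = 𝕖 1 := by
        rw [← vecMul_vecMul, ← vecMul_vecMul, h.vecMul_inv (by omega),
          (hfix 0 (by omega) (by simp)).2, h.vecMul_right (by omega)]
      have h2 : (𝕖 2 : Fin n → R) ᵥ* ((B⁻¹).1 * H * B.1) = v := by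
        rw [← vecMul_vecMul, ← vecMul_vecMul, h.vecMul_inv (by omega), hHw, vecMul_vecMul,
          h.inv_mul_right, vecMul_one]
      rw [← vecMul_vecMul, ← vecMul_vecMul, vecMul_rankOneTransvection _ _ (𝕖 1),
        hdot 1 1 (by omega), if_pos rfl, one_smul, add_vecMul, h1, h2,
        vecMul_rankOneTransvection, add_dotProduct, hdot 1 1 (by omega), hvdot 1 (by omega)]
      simp [hw1, hv]
      abel
    · intro i hi hi'
      obtain ⟨h1, h2⟩ := hfix' i hi hi'
      constructor
      · rw [← mulVec_mulVec, ← mulVec_mulVec, rankOneTransvection_mulVec _ _ (𝕖 i),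
          smul_dotProduct, hdot 2 i hi, if_neg (by omega), smul_zero, zero_smul, add_zero, h1,
          rankOneTransvection_mulVec, hdot 2 i hi, if_neg (by omega), zero_smul, add_zero]
      · rw [← vecMul_vecMul, ← vecMul_vecMul, vecMul_rankOneTransvection _ _ (𝕖 i),
          hdot i 1 (by omega), if_neg (by omega), zero_smul, add_zero, h2,
          vecMul_rankOneTransvection, hdot i 1 (by omega), if_neg (by omega), zero_smul, add_zero]

theorem isWordMatrix_of_isSmall (h : IsStandardPair A B s) {d : Fin n → R}
    (hd0 : d ⬝ᵥ 𝕖 0 = 0) (hd : ∀ i, i < n → IsSmall (d ⬝ᵥ 𝕖 i)) :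
    IsWordMatrix A B (10 * (n - 2) + 3) (𝕋 (𝕖 0) d) := by
  have hn := h.three_le
  have hdot : ∀ i j, j < n → (𝕖 i : Fin n → R) ⬝ᵥ 𝕖 j = if i = j then 1 else 0 :=
    fun i j hj => natSingle_dotProduct_natSingle hj
  have hwdot : ∀ i < n, (d + (1 - d ⬝ᵥ 𝕖 1) • 𝕖 1) ⬝ᵥ 𝕖 i =
      d ⬝ᵥ 𝕖 i + (1 - d ⬝ᵥ 𝕖 1) * (if 1 = i then 1 else 0) := fun i hi => by
    rw [add_dotProduct, smul_dotProduct, hdot 1 i hi, smul_eq_mul]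
  obtain ⟨H, hH, hHw, hfix⟩ := h.exists_isWordMatrix_vecMul (m := n - 2) (by omega)
    (w := d + (1 - d ⬝ᵥ 𝕖 1) • 𝕖 1)
    (by rw [hwdot _ (by omega)]; simp [hd0]) (by rw [hwdot _ (by omega)]; simp)
    (fun i hi hi' => by
      rw [hwdot _ (by omega), if_neg (by omega), mul_zero, add_zero]; exact hd i (by omega))
    (fun i hi hi' => by omega)
  have hu : IsUnit H.det := by simp [hH.det_eq_one]
  have h1 := h.isWordMatrix_left.conj (hH.of_mul_eq_one (mul_nonsing_inv H hu))
    (nonsing_inv_mul H hu)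
  have h0 : H⁻¹ *ᵥ 𝕖 0 = 𝕖 0 := by
    conv_lhs => rw [← (hfix 0 (by omega) (by simp)).1]
    rw [mulVec_mulVec, nonsing_inv_mul H hu, one_mulVec]
  rw [mul_rankOneTransvection_mul (nonsing_inv_mul H hu), h0, hHw] at h1
  have h2 := h1.mul (h.isWordMatrix_left_smul (hd 1 (by omega)))
  rw [rankOneTransvection_mul_same (by rw [hwdot _ (by omega)]; simp [hd0]),
    show d + (1 - d ⬝ᵥ 𝕖 1) • 𝕖 1 + (d ⬝ᵥ 𝕖 1 - 1) • 𝕖 1 = d by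
      rw [add_assoc, ← add_smul]; simp] at h2
  exact h2.mono (by omega)

theorem isWordMatrix_of_isSmall_one (h : IsStandardPair A B s) {d : Fin n → R}
    (hd0 : d ⬝ᵥ 𝕖 0 = 0 ∨ d ⬝ᵥ 𝕖 0 = 1) (hd1 : d ⬝ᵥ 𝕖 1 = 0)
    (hd : ∀ i, i < n → IsSmall (d ⬝ᵥ 𝕖 i)) :
    IsWordMatrix A B (10 * (n - 2) + 5) (𝕋 (𝕖 1) d) := by
  have hn := h.three_le
  have hdot : ∀ i, i + 1 < n → (d ᵥ* (B⁻¹).1) ⬝ᵥ 𝕖 i = d ⬝ᵥ 𝕖 (i + 1) := fun i hi => by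
    rw [← dotProduct_mulVec, h.inv_mulVec hi]
  have h1 := h.isWordMatrix_conj_right (h.isWordMatrix_of_isSmall (d := d ᵥ* (B⁻¹).1)
    (by rw [hdot 0 (by omega), hd1]) (fun i hi => by
      by_cases hi' : i + 1 < n
      · rw [hdot i hi']; exact hd _ hi'
      · obtain rfl : i = n - 1 := by omega
        rw [← dotProduct_mulVec, h.inv_mulVec_last, dotProduct_smul]
        rcases hd0 with hd0 | hd0 <;> rcases h.sign with rfl | rfl <;> simp [hd0, IsSmall]))
  rwa [mul_rankOneTransvection_mul h.inv_mul_right, h.inv_mulVec (by omega), vecMul_vecMul,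
    h.inv_mul_right, vecMul_one] at h1

end IsStandardPair

/-- The Lucas numbers of even index, `lucasEven m = L₂ₘ`. -/
def lucasEven : ℕ → ℕ
  | 0 => 2
  | 1 => 3
  | m + 2 => 3 * lucasEven (m + 1) - lucasEven m

theorem lucasEven_le_succ (m : ℕ) : lucasEven m ≤ lucasEven (m + 1) := by
  induction m with
  | zero => simp [lucasEven]
  | succ m ih => rw [lucasEven]; omega

theorem lucasEven_add_two (m : ℕ) :
    lucasEven (m + 2) + lucasEven m = 3 * lucasEven (m + 1) := by
  have := lucasEven_le_succ m
  rw [lucasEven]; omega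

theorem two_pow_le_lucasEven (m : ℕ) : 2 ^ m ≤ lucasEven m := by
  induction m with
  | zero => simp [lucasEven]
  | succ m ih =>
    cases m with
    | zero => simp [lucasEven]
    | succ m =>
      have h := lucasEven_add_two m
      have := lucasEven_le_succ m
      rw [pow_succ, show m + 1 + 1 = m + 2 from rfl]; omega

theorem lucasEven_succ_le (m : ℕ) : lucasEven (m + 1) ≤ 3 * lucasEven m := by
  cases m with
  | zero => simp [lucasEven]
  | succ m => rw [← lucasEven_add_two m]; exact Nat.le_add_right _ _

theorem pow_mulVec_add_pow_mulVec {S S' : Matrix (Fin n) (Fin n) R} (hS : S * S' = 1)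
    {u : Fin n → R} (hu : S *ᵥ u + S' *ᵥ u = (3 : R) • u) (m : ℕ) :
    S ^ m *ᵥ u + S' ^ m *ᵥ u = (lucasEven m : R) • u := by
  have hS' : S' * S = 1 := mul_eq_one_comm.1 hS
  induction m using Nat.strong_induction_on with
  | _ m ih =>
    match m with
    | 0 => simp [lucasEven, two_smul]
    | 1 => simpa [lucasEven] using hu
    | m + 2 =>
      have h1 := ih (m + 1) (by omega)
      have h0 := ih m (by omega)
      have h2 : (lucasEven (m + 2) : R) = 3 * lucasEven (m + 1) - lucasEven m := by
        rw [eq_sub_iff_add_eq]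
        simpa using congrArg (Nat.cast : ℕ → R) (lucasEven_add_two m)
      have h3 := congrArg (fun v => S ^ (m + 1) *ᵥ v) hu
      have h4 := congrArg (fun v => S' ^ (m + 1) *ᵥ v) hu
      have h5 : S ^ (m + 1) * S' = S ^ m := by rw [pow_succ, mul_assoc, hS, mul_one]
      have h6 : S' ^ (m + 1) * S = S' ^ m := by rw [pow_succ, mul_assoc, hS', mul_one]
      simp only [mulVec_add, mulVec_mulVec, mulVec_smul, ← pow_succ, h5, h6] at h3 h4
      rw [h2, sub_smul, mul_smul, ← h1, ← h0, smul_add, ← h3, ← h4]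
      abel

theorem rankOneTransvection_mul_mul {u u₁ u₂ d r : Fin n → R} {c : R} (h : u₁ + u₂ = c • u)
    (hd : d ⬝ᵥ u = 0) (hd₂ : d ⬝ᵥ u₂ = 0) (hr₂ : r ⬝ᵥ u₂ = 0) :
    𝕋 u₁ d * 𝕋 u r * 𝕋 u₂ d = 𝕋 u (c • d + r) := by
  rw [rankOneTransvection_mul hd, rankOneTransvection, rankOneTransvection, vecMulVec_add,
    vecMulVec_smul, ← smul_vecMulVec, ← h, add_vecMulVec]
  simp [mul_add, add_mul, vecMulVec_mul_vecMulVec, hd₂, hr₂]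
  abel

theorem IsWordMatrix.pow_mul_rankOneTransvection_mul_pow
    {A B : SpecialLinearGroup (Fin n) R} {a b : ℕ} {S S' : Matrix (Fin n) (Fin n) R}
    (hS : S * S' = 1) (hw : IsWordMatrix A B a S') {u : Fin n → R}
    (hu : S *ᵥ u + S' *ᵥ u = (3 : R) • u)
    (hx : ∀ x : Fin n → R, (∀ i : Fin n, (i : ℕ) < 2 → x i = 0) → x ᵥ* S = x ∧ x ⬝ᵥ u = 0)
    (hD : ∀ d : Fin n → ℕ, (∀ i : Fin n, (i : ℕ) < 2 → d i = 0) → (∀ i, d i ≤ 2) →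
      IsWordMatrix A B b (𝕋 u fun i => (d i : R)))
    (m : ℕ) {x : Fin n → ℕ} (hx0 : ∀ i : Fin n, (i : ℕ) < 2 → x i = 0)
    (hxm : ∀ i, x i < lucasEven (m + 1)) :
    IsWordMatrix A B (2 * m * (a + b) + b) (S' ^ m * 𝕋 u (fun i => (x i : R)) * S' ^ m) := by
  have hS' : S' * S = 1 := mul_eq_one_comm.1 hS
  have hpow : ∀ m, S ^ m * S' ^ m = 1 ∧ S' ^ m * S ^ m = 1 := fun m => by
    have hc : Commute S S' := by rw [Commute, SemiconjBy, hS, hS']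
    rw [← hc.mul_pow, ← hc.symm.mul_pow, hS, hS']; simp
  have hfix : ∀ x : Fin n → R, (∀ i : Fin n, (i : ℕ) < 2 → x i = 0) → ∀ m,
      x ᵥ* S ^ m = x ∧ x ᵥ* S' ^ m = x := fun x h0 m => by
    have h1 : x ᵥ* S ^ m = x := by
      induction m with
      | zero => simp
      | succ m ih => rw [pow_succ, ← vecMul_vecMul, ih, (hx x h0).1]
    refine ⟨h1, ?_⟩
    conv_lhs => rw [← h1]
    rw [vecMul_vecMul, (hpow m).1, vecMul_one]
  induction m generalizing x with
  | zero =>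
    simpa using (hD x hx0 fun i => by have := hxm i; simp [lucasEven] at this; omega)
  | succ m ih =>
    have hpos : 0 < lucasEven (m + 1) :=
      (Nat.pos_of_ne_zero (by simp)).trans_le (two_pow_le_lucasEven (m + 1))
    have hdw := hD (fun i => x i / lucasEven (m + 1)) (fun i hi => by simp [hx0 i hi])
      (fun i => Nat.le_of_lt_succ <| Nat.div_lt_of_lt_mul <|
        ((hxm i).trans_le (lucasEven_succ_le (m + 1))).trans_eq (mul_comm _ _))
    have hrw := ih (x := fun i => x i % lucasEven (m + 1)) (fun i hi => by simp [hx0 i hi])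
      (fun i => Nat.mod_lt _ hpos)
    set d : Fin n → R := fun i => ((x i / lucasEven (m + 1) : ℕ) : R) with hd
    set r : Fin n → R := fun i => ((x i % lucasEven (m + 1) : ℕ) : R) with hr
    have hd0 : ∀ i : Fin n, (i : ℕ) < 2 → d i = 0 := fun i hi => by simp [hd, hx0 i hi]
    have hr0 : ∀ i : Fin n, (i : ℕ) < 2 → r i = 0 := fun i hi => by simp [hr, hx0 i hi]
    obtain ⟨hp, hp'⟩ := hpow (m + 1)
    have hxdr : (fun i => (x i : R)) = (lucasEven (m + 1) : R) • d + r := by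
      ext i
      simp only [hd, hr, Pi.add_apply, Pi.smul_apply, smul_eq_mul]
      rw [← Nat.cast_mul, ← Nat.cast_add, Nat.div_add_mod]
    have hdot : ∀ y : Fin n → R, (∀ i : Fin n, (i : ℕ) < 2 → y i = 0) →
        y ⬝ᵥ (S' ^ (m + 1) *ᵥ u) = 0 := fun y hy => by
      rw [dotProduct_mulVec, (hfix y hy _).2, (hx y hy).2]
    have h1 : S ^ (m + 1) * 𝕋 u d * S' ^ (m + 1) = 𝕋 (S ^ (m + 1) *ᵥ u) d := by
      rw [mul_rankOneTransvection_mul hp, (hfix d hd0 _).2]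
    have h2 : S' ^ (m + 1) * 𝕋 u d * S ^ (m + 1) = 𝕋 (S' ^ (m + 1) *ᵥ u) d := by
      rw [mul_rankOneTransvection_mul hp', (hfix d hd0 _).1]
    have key : S' ^ (m + 1) * 𝕋 u (fun i => (x i : R)) * S' ^ (m + 1) =
        𝕋 u d * S' * (S' ^ m * 𝕋 u r * S' ^ m) * S' * 𝕋 u d := by
      rw [hxdr, ← rankOneTransvection_mul_mul (pow_mulVec_add_pow_mulVec hS hu (m + 1))
        (hx d hd0).2 (hdot d hd0) (hdot r hr0), ← h1, ← h2]
      calc _ = (S' ^ (m + 1) * S ^ (m + 1)) * 𝕋 u d * S' ^ (m + 1) * 𝕋 u r * S' ^ (m + 1) *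
              𝕋 u d * (S ^ (m + 1) * S' ^ (m + 1)) := by simp only [mul_assoc]
        _ = 𝕋 u d * S' ^ (m + 1) * 𝕋 u r * S' ^ (m + 1) * 𝕋 u d := by rw [hp, hp']; simp
        _ = _ := by
          nth_rw 1 [pow_succ']
          rw [pow_succ]
          simp only [mul_assoc]
    rw [key]
    exact ((((hdw.mul hw).mul hrw).mul hw).mul hdw).mono (by ring_nf; omega)

theorem IsWordMatrix.rankOneTransvection_of_lt_lucasEven
    {A B : SpecialLinearGroup (Fin n) R} {a b : ℕ} {S S' : Matrix (Fin n) (Fin n) R}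
    (hS : S * S' = 1) (hw : IsWordMatrix A B a S) {u : Fin n → R}
    (hu : S *ᵥ u + S' *ᵥ u = (3 : R) • u)
    (hx : ∀ x : Fin n → R, (∀ i : Fin n, (i : ℕ) < 2 → x i = 0) → x ᵥ* S = x ∧ x ⬝ᵥ u = 0)
    (hD : ∀ d : Fin n → ℕ, (∀ i : Fin n, (i : ℕ) < 2 → d i = 0) → (∀ i, d i ≤ 2) →
      IsWordMatrix A B b (𝕋 u fun i => (d i : R)))
    (m : ℕ) {x : Fin n → ℕ} (hx0 : ∀ i : Fin n, (i : ℕ) < 2 → x i = 0)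
    (hxm : ∀ i, x i < lucasEven (m + 1)) :
    IsWordMatrix A B (4 * m * a + (2 * m + 1) * b) (𝕋 u (fun i => (x i : R))) := by
  have hc : Commute S S' := by rw [Commute, SemiconjBy, hS, mul_eq_one_comm.1 hS]
  have h := pow_mul_rankOneTransvection_mul_pow hS (hw.of_mul_eq_one hS) hu hx hD m hx0 hxm
  have h2 := ((hw.pow m).mul h).mul (hw.pow m)
  have h3 : S ^ m * S' ^ m = 1 := by rw [← hc.mul_pow, hS, one_pow]
  have h4 : S' ^ m * S ^ m = 1 := mul_eq_one_comm.1 h3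
  rw [show S ^ m * (S' ^ m * 𝕋 u (fun i => (x i : R)) * S' ^ m) * S ^ m =
    (S ^ m * S' ^ m) * 𝕋 u (fun i => (x i : R)) * (S' ^ m * S ^ m) by simp only [mul_assoc],
    h3, h4, one_mul, mul_one] at h2
  exact h2.mono (by ring_nf; omega)

namespace IsStandardPair

variable {A B : SpecialLinearGroup (Fin n) R} {s : R}

theorem isWordMatrix_natCast_smul (h : IsStandardPair A B s) {j : ℕ} (hj : j < 2) (m : ℕ)
    {x : Fin n → ℕ} (hx0 : ∀ i : Fin n, (i : ℕ) < 2 → x i = 0)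
    (hxm : ∀ i, x i < lucasEven (m + 1)) :
    IsWordMatrix A B ((60 * m + 10) * n) (𝕋 (𝕖 j) (fun i => (x i : R))) := by
  have hn := h.three_le
  have h00 : (𝕖 0 : Fin n → R) ⬝ᵥ 𝕖 0 = 1 := by
    rw [natSingle_dotProduct_natSingle (by omega), if_pos rfl]
  have h11 : (𝕖 1 : Fin n → R) ⬝ᵥ 𝕖 1 = 1 := by
    rw [natSingle_dotProduct_natSingle (by omega), if_pos rfl]
  have h01 : (𝕖 0 : Fin n → R) ⬝ᵥ 𝕖 1 = 0 := by
    rw [natSingle_dotProduct_natSingle (by omega), if_neg (by omega)]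
  have h10 : (𝕖 1 : Fin n → R) ⬝ᵥ 𝕖 0 = 0 := by
    rw [natSingle_dotProduct_natSingle (by omega), if_neg (by omega)]
  have hdot : ∀ x : Fin n → R, (∀ i : Fin n, (i : ℕ) < 2 → x i = 0) → ∀ i < 2, x ⬝ᵥ 𝕖 i = 0 :=
    fun x hx i hi => by rw [dotProduct_natSingle (by omega)]; exact hx _ hi
  have hsmall : ∀ i < n, IsSmall ((𝕖 0 : Fin n → R) ⬝ᵥ 𝕖 i) := fun i hi => by
    rw [natSingle_dotProduct_natSingle hi]; split_ifs <;> simp [IsSmall]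
  have hS : 𝕋 (𝕖 0) (𝕖 1) * 𝕋 (𝕖 1) (𝕖 0) * (𝕋 (𝕖 1) (-𝕖 0) * 𝕋 (𝕖 0) (-𝕖 1) :
      Matrix (Fin n) (Fin n) R) = 1 := by
    rw [mul_assoc, ← mul_assoc (𝕋 (𝕖 1) (𝕖 0)), rankOneTransvection_mul_neg h01, one_mul,
      rankOneTransvection_mul_neg h10]
  have hw : IsWordMatrix A B (10 * n) (𝕋 (𝕖 0) (𝕖 1) * 𝕋 (𝕖 1) (𝕖 0)) :=
    (h.isWordMatrix_left.mul (h.isWordMatrix_of_isSmall_one (.inr h00) h01 hsmall)).mono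
      (by omega)
  refine (hw.rankOneTransvection_of_lt_lucasEven hS (b := 10 * n) ?_ (fun x hx => ⟨?_, ?_⟩) ?_ m
    hx0 hxm).mono (by ring_nf; rfl)
  · have h3 : (3 : R) = 1 + 1 + 1 := by norm_num
    interval_cases j <;>
      simp only [← mulVec_mulVec, rankOneTransvection_mulVec, dotProduct_add, dotProduct_neg,
        neg_dotProduct, h00, h01, h10, h11, h3, add_smul, one_smul, neg_smul, neg_zero,
        zero_smul, add_zero] <;>
      simp <;> abel
  · rw [← vecMul_vecMul, vecMul_rankOneTransvection _ _ x, hdot x hx 0 (by omega), zero_smul,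
      add_zero, vecMul_rankOneTransvection, hdot x hx 1 (by omega), zero_smul, add_zero]
  · exact hdot x hx j hj
  · intro d hd0 hd2
    have hd0' := hdot (fun i => (d i : R)) (fun i hi => by simp [hd0 i hi])
    have hd' : ∀ i < n, IsSmall ((fun i => (d i : R)) ⬝ᵥ 𝕖 i) := fun i hi => by
      rw [dotProduct_natSingle hi]
      have := hd2 ⟨i, hi⟩
      interval_cases d ⟨i, hi⟩ <;> simp [IsSmall]
    interval_cases j
    · exact (h.isWordMatrix_of_isSmall (hd0' 0 (by omega)) hd').mono (by omega)
    · exact (h.isWordMatrix_of_isSmall_one (.inl (hd0' 0 (by omega))) (hd0' 1 (by omega)) hd').mono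
        (by omega)

end IsStandardPair

theorem IsStandardPair.isWordMatrix_rankOneTransvection {k : ℕ}
    {A B : SpecialLinearGroup (Fin n) (ZMod k)} {s : ZMod k} (h : IsStandardPair A B s)
    (hk : k ≠ 0) (p : Fin n) {x : Fin n → ZMod k} (hx : x p = 0) :
    IsWordMatrix A B ((120 * Nat.log 2 k + 24) * n) (𝕋 (Pi.single p 1) x) := by
  have : NeZero k := ⟨hk⟩
  have hn := h.three_le
  have hword : ∀ j < 2, ∀ x : Fin n → ZMod k, (∀ i : Fin n, (i : ℕ) < 2 → x i = 0) →
      IsWordMatrix A B ((60 * Nat.log 2 k + 10) * n) (𝕋 (𝕖 j) x) := fun j hj x hx => by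
    have := h.isWordMatrix_natCast_smul hj (Nat.log 2 k) (x := fun i => (x i).val)
      (fun i hi => by simp [hx i hi])
      (fun i => (ZMod.val_lt _).trans ((Nat.lt_pow_succ_log_self one_lt_two k).trans_le
        (two_pow_le_lucasEven _)))
    simpa using this
  have hzero : ∀ x : Fin n → ZMod k, x ⬝ᵥ 𝕖 0 = 0 →
      IsWordMatrix A B ((120 * Nat.log 2 k + 22) * n) (𝕋 (𝕖 0) x) := fun x hx => by
    have h10 : (𝕖 1 : Fin n → ZMod k) ⬝ᵥ 𝕖 0 = 0 := by
      rw [natSingle_dotProduct_natSingle (by omega), if_neg (by omega)]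
    have h0 : (x - (x ⬝ᵥ 𝕖 1) • 𝕖 1) ⬝ᵥ 𝕖 0 = 0 := by
      rw [sub_dotProduct, smul_dotProduct, hx, h10]; simp
    have h1 := hword 0 (by omega) (x - (x ⬝ᵥ 𝕖 1) • 𝕖 1) fun i hi => by
      refine (dotProduct_natSingle i.2 _).symm.trans ?_
      obtain hi | hi : (i : ℕ) = 0 ∨ (i : ℕ) = 1 := by omega
      · rw [hi, h0]
      · rw [hi, sub_dotProduct, smul_dotProduct, natSingle_dotProduct_natSingle (by omega)]
        simp
    have h2 := hword 1 (by omega) ((x ⬝ᵥ 𝕖 1) • 𝕖 2) fun i hi => by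
      simp [natSingle, show (i : ℕ) ≠ 2 by omega]
    have h3 := h2.conj h.isWordMatrix_right h.mul_inv_right
    rw [mul_rankOneTransvection_mul h.mul_inv_right, h.shift 0 (by omega), smul_vecMul,
      h.vecMul_inv (by omega)] at h3
    have h4 := h1.mul h3
    rw [rankOneTransvection_mul_same h0, sub_add_cancel] at h4
    exact h4.mono (by ring_nf; omega)
  have hpow : ∀ i < n, (B⁻¹).1 ^ i *ᵥ 𝕖 0 = 𝕖 i := fun i => by
    induction i with
    | zero => simp
    | succ i ih =>
      intro hi
      rw [pow_succ', ← mulVec_mulVec, ih (by omega), h.inv_mulVec hi]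
  have hmul : (B⁻¹).1 ^ (p : ℕ) * B.1 ^ (p : ℕ) = 1 := by
    have hc : Commute (B⁻¹).1 B.1 := h.inv_mul_right.trans h.mul_inv_right.symm
    rw [← hc.mul_pow, h.inv_mul_right, one_pow]
  have h1 := (hzero (x ᵥ* (B⁻¹).1 ^ (p : ℕ)) (by
    rw [← dotProduct_mulVec, hpow p p.2, dotProduct_natSingle p.2, hx])).conj
      (h.isWordMatrix_inv.pow p) hmul
  rw [mul_rankOneTransvection_mul hmul, hpow p p.2, natSingle_val, vecMul_vecMul, hmul,
    vecMul_one] at h1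
  exact h1.mono (by ring_nf; omega)

theorem isStandardPair_of_eq {A B : SpecialLinearGroup (Fin n) R} (hn : 3 ≤ n)
    (hA : A.1 = Amat n R) (hB : B.1 = Bmat n R) : IsStandardPair A B ((-1) ^ (n - 1)) where
  three_le := hn
  left_eq := by
    rw [hA]
    ext i j
    simp only [Amat, rankOneTransvection, natSingle, Matrix.of_apply, Matrix.add_apply, one_apply,
      vecMulVec_apply]
    by_cases hij : i = j
    · subst hij
      by_cases hi : (i : ℕ) = 0 <;> simp [hi]
    · by_cases hi : (i : ℕ) = 0 <;> simp [hij, hi]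
  shift i hi := by
    rw [hB]
    ext j
    have := dotProduct_natSingle hi (Bmat n R j)
    rw [show (Bmat n R *ᵥ 𝕖 (i + 1)) j = Bmat n R j ⬝ᵥ 𝕖 (i + 1) from rfl, this]
    simp [Bmat, natSingle, eq_comm]
  wrap := by
    rw [hB]
    ext j
    have := dotProduct_natSingle (show 0 < n by omega) (Bmat n R j)
    rw [show (Bmat n R *ᵥ 𝕖 0) j = Bmat n R j ⬝ᵥ 𝕖 0 from rfl, this]
    simp [Bmat, natSingle]
  sign := neg_one_pow_eq_or R (n - 1)

end StandardPair

theorem wordLength_le_log (n : ℕ) {k : ℕ} (hk : 2 ≤ k) :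
    ((3 * n * ((120 * Nat.log 2 k + 24) * n) : ℕ) : ℝ) ≤ 3600 * n ^ 2 * Real.log k := by
  have hk' : (2 : ℝ) ≤ k := by exact_mod_cast hk
  have h2 := Real.log_two_gt_d9
  have hlog : (Nat.log 2 k : ℝ) * Real.log 2 ≤ Real.log k := by
    rw [← Real.log_pow]
    refine Real.log_le_log (by positivity) ?_
    exact_mod_cast Nat.pow_log_le_self 2 (by omega)
  have h1 : Real.log 2 ≤ Real.log k := Real.log_le_log (by norm_num) hk'
  have hm : (0 : ℝ) ≤ Nat.log 2 k := Nat.cast_nonneg _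
  have key : 360 * (Nat.log 2 k : ℝ) + 72 ≤ 3600 * Real.log k := by nlinarith
  push_cast
  nlinarith [mul_le_mul_of_nonneg_left key (sq_nonneg (n : ℝ))]

end DiameterBound

/-- For all integers k ≥ 2 and n ≥ 3, every element of SL_n(ℤ/kℤ) is a product of at
most 3600·n²·ln k elements of {Ā, Ā⁻¹, B̄, B̄⁻¹}. -/
theorem diameter_SL_n_ZMod_le (n k : ℕ) (hn : 3 ≤ n) (hk : 2 ≤ k)
    (A B : Matrix.SpecialLinearGroup (Fin n) (ZMod k))
    (hA : (A : Matrix (Fin n) (Fin n) (ZMod k)) = Amat n (ZMod k))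
    (hB : (B : Matrix (Fin n) (Fin n) (ZMod k)) = Bmat n (ZMod k))
    (M : Matrix.SpecialLinearGroup (Fin n) (ZMod k)) :
    ∃ l : List (Matrix.SpecialLinearGroup (Fin n) (ZMod k)),
      (l.length : ℝ) ≤ 3600 * n ^ 2 * Real.log k ∧
      (∀ x ∈ l, x = A ∨ x = A⁻¹ ∨ x = B ∨ x = B⁻¹) ∧
      l.prod = M := by
  obtain ⟨l, hl, hx, hp⟩ := IsWordMatrix.of_det_eq_one (A := A) (B := B)
    (ZMod.exists_isUnit_add_mul (by omega))
    (fun p x hx => (isStandardPair_of_eq hn hA hB).isWordMatrix_rankOneTransvection (by omega) p hx)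
    (by omega) M.det_coe
  exact ⟨l, (Nat.cast_le.2 hl).trans (wordLength_le_log n hk), hx, Subtype.ext hp⟩
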